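/- arXiv:1806.11416 — 5 statements merged into one kernel-verified Lean document; each statement's English description precedes it below -/
import Mathlib

section
/- Let R ⊆ ℝⁿ be a convex set, let g be twice continuously differentiable on an open set containing R, let ε > 0, and let f : R → ℝ be an ε-approximation of g on R. If x, y ∈ R and f is piecewise affine with s pieces along the segment [x, y], then s ≥ (‖x − y‖₂ / (4√ε)) · Ψ(g, x, y). -/
open scoped RealInnerProductSpace

noncomputable def hess {n : ℕ} (g : EuclideanSpace ℝ (Fin n) → ℝ)
    (z : EuclideanSpace ℝ (Fin n)) : Matrix (Fin n) (Fin n) ℝ :=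
  fun i j => iteratedFDeriv ℝ 2 g z ![EuclideanSpace.single i 1, EuclideanSpace.single j 1]

noncomputable def lamMax {n : ℕ} (A : Matrix (Fin n) (Fin n) ℝ) : ℝ := sSup (spectrum ℝ A)

noncomputable def lamMin {n : ℕ} (A : Matrix (Fin n) (Fin n) ℝ) : ℝ := sInf (spectrum ℝ A)

noncomputable def Psi {n : ℕ} (g : EuclideanSpace ℝ (Fin n) → ℝ)
    (x y : EuclideanSpace ℝ (Fin n)) : ℝ :=
  Real.sqrt (sInf ((fun α : ℝ =>
      max 0 (Real.sign (lamMax (hess g ((1 - α) • x + α • y)) *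
          lamMin (hess g ((1 - α) • x + α • y))) *
        min |lamMax (hess g ((1 - α) • x + α • y))|
            |lamMin (hess g ((1 - α) • x + α • y))|)) '' Set.Icc (0 : ℝ) 1))

/-- `f` is piecewise affine with `s` pieces along the segment `[x, y]`. -/
def PiecewiseAffineAlong {n : ℕ} (f : EuclideanSpace ℝ (Fin n) → ℝ)
    (x y : EuclideanSpace ℝ (Fin n)) (s : ℕ) : Prop :=
  ∃ α : ℕ → ℝ, α 0 = 0 ∧ α s = 1 ∧ (∀ j < s, α j < α (j + 1)) ∧
    ∀ j < s, ∃ p : EuclideanSpace ℝ (Fin n), ∃ q : ℝ,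
      ∀ a ∈ Set.Icc (α j) (α (j + 1)),
        f ((1 - a) • x + a • y) = ⟪p, (1 - a) • x + a • y⟫ + q

open scoped Matrix

theorem quad_lower {n : ℕ} (A : Matrix (Fin n) (Fin n) ℝ) (hA : A.IsHermitian) (c : ℝ)
    (hc : ∀ r ∈ spectrum ℝ A, c ≤ r) (v : Fin n → ℝ) : c * (v ⬝ᵥ v) ≤ v ⬝ᵥ (A *ᵥ v) := by
  have hB : (A - algebraMap ℝ (Matrix (Fin n) (Fin n) ℝ) c).IsHermitian := by
    apply hA.sub
    rw [Algebra.algebraMap_eq_smul_one]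
    unfold Matrix.IsHermitian
    simp
  have hps : (A - algebraMap ℝ (Matrix (Fin n) (Fin n) ℝ) c).PosSemidef := by
    rw [hB.posSemidef_iff_eigenvalues_nonneg]
    intro i
    have h1 : hB.eigenvalues i ∈ spectrum ℝ (A - algebraMap ℝ (Matrix (Fin n) (Fin n) ℝ) c) := by
      rw [hB.spectrum_real_eq_range_eigenvalues]
      exact ⟨i, rfl⟩
    rw [← spectrum.sub_singleton_eq] at h1
    obtain ⟨r, hr, d, hd, h⟩ := h1
    have := hc r hr
    rw [Set.mem_singleton_iff] at hd
    simp only [Pi.zero_apply]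
    simp only at h
    linarith
  have := hps.dotProduct_mulVec_nonneg v
  rw [Matrix.sub_mulVec, dotProduct_sub, Algebra.algebraMap_eq_smul_one, Matrix.smul_mulVec,
    Matrix.one_mulVec, dotProduct_smul] at this
  simp only [star_trivial, smul_eq_mul] at this
  linarith

theorem quad_abs {n : ℕ} (A : Matrix (Fin n) (Fin n) ℝ) (hA : A.IsHermitian) (v : Fin n → ℝ) :
    max 0 (Real.sign (lamMax A * lamMin A) * min |lamMax A| |lamMin A|) * (v ⬝ᵥ v)
      ≤ |v ⬝ᵥ (A *ᵥ v)| := by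
  have hv : 0 ≤ v ⬝ᵥ v := by
    simpa using dotProduct_star_self_nonneg v
  have hfin : (spectrum ℝ A).Finite := A.finite_real_spectrum
  have hlo : ∀ r ∈ spectrum ℝ A, lamMin A ≤ r := fun r hr => csInf_le hfin.bddBelow hr
  have hhi : ∀ r ∈ spectrum ℝ A, r ≤ lamMax A := fun r hr => le_csSup hfin.bddAbove hr
  rcases le_or_gt (lamMax A * lamMin A) 0 with h | h
  · have : max 0 (Real.sign (lamMax A * lamMin A) * min |lamMax A| |lamMin A|) = 0 := by
      apply max_eq_left
      apply mul_nonpos_of_nonpos_of_nonneg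
      · rcases h.lt_or_eq with h | h
        · rw [Real.sign_of_neg h]; norm_num
        · rw [h, Real.sign_zero]
      · positivity
    rw [this, zero_mul]
    exact abs_nonneg _
  · rw [Real.sign_of_pos h, one_mul, max_eq_right (by positivity)]
    rcases pos_and_pos_or_neg_and_neg_of_mul_pos h with ⟨h1, h2⟩ | ⟨h1, h2⟩
    · calc _ ≤ lamMin A * (v ⬝ᵥ v) := by
            apply mul_le_mul_of_nonneg_right _ hv
            exact (min_le_right _ _).trans (abs_of_pos h2).le
        _ ≤ _ := quad_lower A hA _ hlo v
        _ ≤ _ := le_abs_self _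
    · calc _ ≤ (-lamMax A) * (v ⬝ᵥ v) := by
            apply mul_le_mul_of_nonneg_right _ hv
            exact (min_le_left _ _).trans (abs_of_neg h1).le
        _ ≤ v ⬝ᵥ ((-A) *ᵥ v) := by
            apply quad_lower (-A) hA.neg
            intro r hr
            rw [← spectrum.neg_eq] at hr
            have := hhi _ hr
            linarith
        _ = -(v ⬝ᵥ (A *ᵥ v)) := by rw [Matrix.neg_mulVec, dotProduct_neg]
        _ ≤ _ := neg_le_abs _

theorem hess_quad {n : ℕ} (g : EuclideanSpace ℝ (Fin n) → ℝ) (z d : EuclideanSpace ℝ (Fin n)) :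
    (fun i => d i) ⬝ᵥ (hess g z *ᵥ (fun i => d i)) = fderiv ℝ (fderiv ℝ g) z d d := by
  have hd : d = ∑ i, d i • EuclideanSpace.single i (1 : ℝ) := by
    ext j
    simp [Finset.sum_apply, Pi.single_apply]
  conv_rhs => rw [hd]
  simp only [map_sum, map_smul, sum_apply, smul_apply]
  simp only [dotProduct, Matrix.mulVec, hess, iteratedFDeriv_two_apply, smul_eq_mul,
    Matrix.cons_val_zero, Matrix.cons_val_one]
  simp only [Finset.mul_sum]
  rw [Finset.sum_comm]
  exact Finset.sum_congr rfl fun i _ => Finset.sum_congr rfl fun j _ => by ring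

theorem hess_herm {n : ℕ} (g : EuclideanSpace ℝ (Fin n) → ℝ) (z : EuclideanSpace ℝ (Fin n))
    (hg : ContDiffAt ℝ 2 g z) : (hess g z).IsHermitian := by
  have h := hg.isSymmSndFDerivAt (by simp)
  ext i j
  simp only [Matrix.conjTranspose_apply, star_trivial, hess, iteratedFDeriv_two_apply,
    Matrix.cons_val_zero, Matrix.cons_val_one]
  exact h _ _

theorem second_diff (h h' h'' : ℝ → ℝ) (a b : ℝ) (hab : a < b)
    (h1 : ∀ t ∈ Set.Icc a b, HasDerivAt h (h' t) t)
    (h2 : ∀ t ∈ Set.Icc a b, HasDerivAt h' (h'' t) t) :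
    ∃ ξ ∈ Set.Icc a b, h a + h b - 2 * h ((a + b) / 2) = h'' ξ * ((b - a) / 2) ^ 2 := by
  set δ := (b - a) / 2 with hδ
  have hδ0 : 0 < δ := by rw [hδ]; linarith
  have hm : ∀ t ∈ Set.Icc a (a + δ), HasDerivAt (fun t => h (t + δ) - h t) (h' (t + δ) - h' t) t := by
    intro t ht
    have e1 : HasDerivAt (fun t => h (t + δ)) (h' (t + δ)) t :=
      (h1 (t + δ) ⟨by linarith [ht.1], by linarith [ht.2]⟩).comp_add_const t δ
    exact e1.sub (h1 t ⟨ht.1, by linarith [ht.2]⟩)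
  obtain ⟨η, hη, e1⟩ := exists_hasDerivAt_eq_slope (fun t => h (t + δ) - h t)
    (fun t => h' (t + δ) - h' t) (a := a) (b := a + δ) (by linarith)
    (fun t ht => (hm t ht).continuousAt.continuousWithinAt)
    (fun t ht => hm t ⟨ht.1.le, ht.2.le⟩)
  have hsub : ∀ t ∈ Set.Icc η (η + δ), t ∈ Set.Icc a b := fun t ht =>
    ⟨by linarith [ht.1, hη.1], by linarith [ht.2, hη.2]⟩
  obtain ⟨ξ, hξ, e2⟩ := exists_hasDerivAt_eq_slope h' h'' (a := η) (b := η + δ) (by linarith)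
    (fun t ht => (h2 t (hsub t ht)).continuousAt.continuousWithinAt)
    (fun t ht => h2 t (hsub t ⟨ht.1.le, ht.2.le⟩))
  refine ⟨ξ, hsub ξ ⟨hξ.1.le, hξ.2.le⟩, ?_⟩
  have hc : (a + b) / 2 = a + δ := by rw [hδ]; ring
  have hb : b = a + δ + δ := by rw [hδ]; ring
  rw [hc, e2]
  simp only [add_sub_cancel_left] at e1 ⊢
  rw [e1, ← hb]
  field_simp
  ring

theorem line_derivs {n : ℕ} (g : EuclideanSpace ℝ (Fin n) → ℝ) (x y : EuclideanSpace ℝ (Fin n))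
    (t : ℝ) (hg : ContDiffAt ℝ 2 g ((1 - t) • x + t • y)) :
    HasDerivAt (fun t : ℝ => g ((1 - t) • x + t • y))
      (fderiv ℝ g ((1 - t) • x + t • y) (y - x)) t ∧
    HasDerivAt (fun t : ℝ => fderiv ℝ g ((1 - t) • x + t • y) (y - x))
      (fderiv ℝ (fderiv ℝ g) ((1 - t) • x + t • y) (y - x) (y - x)) t := by
  have hl : HasDerivAt (fun t : ℝ => (1 - t) • x + t • y) (y - x) t := by
    have e1 : HasDerivAt (fun t : ℝ => (1 - t) • x) ((-1 : ℝ) • x) t :=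
      ((hasDerivAt_id t).const_sub 1).smul_const x
    have e2 : HasDerivAt (fun t : ℝ => t • y) ((1 : ℝ) • y) t :=
      (hasDerivAt_id t).smul_const y
    have := e1.add e2
    have e : (-1 : ℝ) • x + (1 : ℝ) • y = y - x := by module
    rw [e] at this
    exact this
  constructor
  · have hd := (hg.differentiableAt (by norm_num)).hasFDerivAt
    exact hd.comp_hasDerivAt t hl
  · have hg1 : ContDiffAt ℝ 1 (fderiv ℝ g) ((1 - t) • x + t • y) :=
      hg.fderiv_right (by norm_num)
    have hd := (hg1.differentiableAt (by norm_num)).hasFDerivAt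
    have h3 := hd.comp_hasDerivAt t hl
    have h4 := h3.clm_apply (hasDerivAt_const t (y - x))
    simpa using h4

/-- Proposition 2: a piecewise-affine ε-approximation of a C² function `g` on a convex set
has at least `(‖x − y‖₂ / (4√ε)) · Ψ(g, x, y)` pieces along any segment `[x, y]` in the set. -/
theorem pieces_ge_of_approx {n : ℕ} (R : Set (EuclideanSpace ℝ (Fin n))) (hR : Convex ℝ R)
    (U : Set (EuclideanSpace ℝ (Fin n))) (hU : IsOpen U) (hRU : R ⊆ U)
    (g : EuclideanSpace ℝ (Fin n) → ℝ) (hg : ContDiffOn ℝ 2 g U)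
    (ε : ℝ) (hε : 0 < ε)
    (f : EuclideanSpace ℝ (Fin n) → ℝ) (hf : ∀ z ∈ R, |f z - g z| ≤ ε)
    (x y : EuclideanSpace ℝ (Fin n)) (hx : x ∈ R) (hy : y ∈ R)
    (s : ℕ) (hs : PiecewiseAffineAlong f x y s) :
    (s : ℝ) ≥ (‖x - y‖ / (4 * Real.sqrt ε)) * Psi g x y := by
  obtain ⟨α, h0, h1, hlt, haff⟩ := hs
  unfold Psi
  set F : ℝ → ℝ := fun α : ℝ =>
      max 0 (Real.sign (lamMax (hess g ((1 - α) • x + α • y)) *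
          lamMin (hess g ((1 - α) • x + α • y))) *
        min |lamMax (hess g ((1 - α) • x + α • y))|
            |lamMin (hess g ((1 - α) • x + α • y))|) with hF
  set m := sInf (F '' Set.Icc (0 : ℝ) 1) with hm
  have hF0 : ∀ a, 0 ≤ F a := fun a => le_max_left _ _
  have hm0 : 0 ≤ m := by
    apply Real.sInf_nonneg
    rintro _ ⟨a, _, rfl⟩
    exact hF0 a
  have hmle : ∀ a ∈ Set.Icc (0 : ℝ) 1, m ≤ F a := fun a ha =>
    csInf_le ⟨0, by rintro _ ⟨a, _, rfl⟩; exact hF0 a⟩ ⟨a, ha, rfl⟩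
  have hzR : ∀ a ∈ Set.Icc (0 : ℝ) 1, (1 - a) • x + a • y ∈ R := fun a ha =>
    hR hx hy (by linarith [ha.2]) ha.1 (by ring)
  have hgz : ∀ a ∈ Set.Icc (0 : ℝ) 1, ContDiffAt ℝ 2 g ((1 - a) • x + a • y) := fun a ha =>
    hg.contDiffAt (hU.mem_nhds (hRU (hzR a ha)))
  have hlow : ∀ a ∈ Set.Icc (0 : ℝ) 1, m * ‖x - y‖ ^ 2 ≤
      |fderiv ℝ (fderiv ℝ g) ((1 - a) • x + a • y) (y - x) (y - x)| := by
    intro a ha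
    have h2 := quad_abs _ (hess_herm g _ (hgz a ha)) (fun i => (y - x) i)
    rw [hess_quad] at h2
    have hn : (fun i => (y - x) i) ⬝ᵥ (fun i => (y - x) i) = ‖x - y‖ ^ 2 := by
      rw [norm_sub_rev, EuclideanSpace.norm_sq_eq]
      simp only [dotProduct, Real.norm_eq_abs, sq_abs]
      exact Finset.sum_congr rfl fun i _ => by ring
    rw [hn] at h2
    exact (mul_le_mul_of_nonneg_right (hmle a ha) (by positivity)).trans h2
  -- monotonicity of the breakpoints
  have hmono : ∀ i j, i ≤ j → j ≤ s → α i ≤ α j := by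
    intro i j hij
    induction j, hij using Nat.le_induction with
    | base => intro _; exact le_rfl
    | succ k hk ih => intro hks; exact (ih (by omega)).trans (hlt k (by omega)).le
  have hpiece : ∀ j ∈ Finset.range s,
      (α (j + 1) - α j) * (‖x - y‖ * Real.sqrt m) ≤ 4 * Real.sqrt ε := by
    intro j hj
    have hj : j < s := Finset.mem_range.mp hj
    have hsub : ∀ t ∈ Set.Icc (α j) (α (j + 1)), t ∈ Set.Icc (0 : ℝ) 1 := fun t ht =>
      ⟨by have := hmono 0 j (by omega) (by omega); linarith [ht.1],
       by have := hmono (j + 1) s (by omega) le_rfl; linarith [ht.2]⟩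
    obtain ⟨p, q, hpq⟩ := haff j hj
    have hab := hlt j hj
    set a := α j
    set b := α (j + 1)
    obtain ⟨ξ, hξ, he⟩ := second_diff (fun t : ℝ => g ((1 - t) • x + t • y))
      (fun t : ℝ => fderiv ℝ g ((1 - t) • x + t • y) (y - x))
      (fun t : ℝ => fderiv ℝ (fderiv ℝ g) ((1 - t) • x + t • y) (y - x) (y - x)) a b hab
      (fun t ht => (line_derivs g x y t (hgz t (hsub t ht))).1)
      (fun t ht => (line_derivs g x y t (hgz t (hsub t ht))).2)
    have ha : a ∈ Set.Icc a b := ⟨le_rfl, hab.le⟩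
    have hb : b ∈ Set.Icc a b := ⟨hab.le, le_rfl⟩
    have hc : (a + b) / 2 ∈ Set.Icc a b := ⟨by linarith, by linarith⟩
    have ea := hf _ (hzR a (hsub a ha))
    have eb := hf _ (hzR b (hsub b hb))
    have ec := hf _ (hzR _ (hsub _ hc))
    rw [hpq _ ha] at ea
    rw [hpq _ hb] at eb
    rw [hpq _ hc] at ec
    simp only [inner_add_right, inner_smul_right] at ea eb ec
    have hbd : |g ((1 - a) • x + a • y) + g ((1 - b) • x + b • y)
        - 2 * g ((1 - (a + b) / 2) • x + ((a + b) / 2) • y)| ≤ 4 * ε := by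
      rw [abs_le] at ea eb ec ⊢
      constructor <;> linarith [ea.1, ea.2, eb.1, eb.2, ec.1, ec.2]
    rw [he, abs_mul, abs_of_nonneg (sq_nonneg ((b - a) / 2))] at hbd
    have h3 := mul_le_mul_of_nonneg_right (hlow ξ (hsub ξ hξ)) (sq_nonneg ((b - a) / 2))
    have h4 : ((b - a) * (‖x - y‖ * Real.sqrt m)) ^ 2 ≤ (4 * Real.sqrt ε) ^ 2 := by
      rw [mul_pow, mul_pow, mul_pow, Real.sq_sqrt hm0, Real.sq_sqrt hε.le]
      nlinarith
    exact (pow_le_pow_iff_left₀ (by have := sub_pos.mpr hab; positivity) (by positivity)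
      two_ne_zero).mp h4
  have hsum := Finset.sum_le_sum hpiece
  rw [← Finset.sum_mul, Finset.sum_range_sub, h0, h1, Finset.sum_const, Finset.card_range,
    nsmul_eq_mul] at hsum
  have hse : 0 < 4 * Real.sqrt ε := by positivity
  rw [ge_iff_le, div_mul_eq_mul_div, div_le_iff₀ hse]
  linarith
end

section
/- Let g be three times continuously differentiable on an open set containing [0,1]ⁿ with |D^J g(x)| ≤ δ for every x ∈ [0,1]ⁿ and every multi-index J with |J| = 3, let ε > 0, and let f : [0,1]ⁿ → ℝ be an ε-approximation of g on [0,1]ⁿ. Then there exist x, y ∈ [0,1]ⁿ such that whenever f is piecewise affine with s pieces along the segment [x, y], one has s ≥ sqrt( ( max_{z ∈ [0,1]ⁿ} |Δg(z)| · n⁻¹ − δ·n^{3/2} )⁺ / (16 ε) ). -/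
open scoped RealInnerProductSpace

/-- The unit cube `[0,1]ⁿ`. -/
def unitCube (n : ℕ) : Set (EuclideanSpace ℝ (Fin n)) :=
  {z | ∀ k, z k ∈ Set.Icc (0 : ℝ) 1}

theorem aux_hasDeriv {n : ℕ} (g : EuclideanSpace ℝ (Fin n) → ℝ) (x e : EuclideanSpace ℝ (Fin n))
    (t : ℝ) (hg : ContDiffAt ℝ 3 g (x + t • e)) (i : ℕ) (hi : i < 3) :
    HasDerivAt (fun t : ℝ => iteratedFDeriv ℝ i g (x + t • e) (fun _ => e))
      (iteratedFDeriv ℝ (i + 1) g (x + t • e) (fun _ => e)) t := by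
  have h1 : DifferentiableAt ℝ (iteratedFDeriv ℝ i g) (x + t • e) :=
    hg.differentiableAt_iteratedFDeriv (by exact_mod_cast hi)
  have h2 : HasDerivAt (fun t : ℝ => x + t • e) e t := by
    simpa using ((hasDerivAt_id t).smul_const e).const_add x
  have h3 := h1.hasFDerivAt.comp_hasDerivAt t h2
  have h4 := (ContinuousMultilinearMap.apply ℝ (fun _ : Fin i => EuclideanSpace ℝ (Fin n)) ℝ
    (fun _ => e)).hasFDerivAt.comp_hasDerivAt t h3
  rw [iteratedFDeriv_succ_apply_left]
  exact h4

/-- second difference mean value theorem -/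
theorem aux_second_diff (φ φ' φ'' : ℝ → ℝ) (h1 : ∀ t ∈ Set.Icc (0:ℝ) 1, HasDerivAt φ (φ' t) t)
    (h2 : ∀ t ∈ Set.Icc (0:ℝ) 1, HasDerivAt φ' (φ'' t) t) (a r : ℝ) (hr : 0 < r) (ha : 0 ≤ a)
    (hb : a + 2 * r ≤ 1) :
    ∃ ξ ∈ Set.Icc (0:ℝ) 1, φ (a + 2 * r) + φ a - 2 * φ (a + r) = r ^ 2 * φ'' ξ := by
  have hD : ∀ t ∈ Set.Icc a (a + r),
      HasDerivAt (fun t => φ (t + r) - φ t) (φ' (t + r) - φ' t) t := by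
    intro t ht
    have := h1 (t + r) ⟨by linarith [ht.1], by linarith [ht.2]⟩
    exact (this.comp_add_const t r).sub (h1 t ⟨by linarith [ht.1], by linarith [ht.2]⟩)
  obtain ⟨c, hc, hc'⟩ := exists_hasDerivAt_eq_slope (fun t => φ (t + r) - φ t)
    (fun t => φ' (t + r) - φ' t) (show a < a + r by linarith)
    (fun t ht => (hD t ht).continuousAt.continuousWithinAt)
    (fun t ht => hD t ⟨ht.1.le, ht.2.le⟩)
  obtain ⟨ξ, hξ, hξ'⟩ := exists_hasDerivAt_eq_slope φ' φ'' (show c < c + r by linarith)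
    (fun t ht => (h2 t ⟨by linarith [ht.1, hc.1], by linarith [ht.2, hc.2]⟩).continuousAt.continuousWithinAt)
    (fun t ht => h2 t ⟨by linarith [ht.1, hc.1], by linarith [ht.2, hc.2]⟩)
  refine ⟨ξ, ⟨by linarith [hξ.1, hc.1], by linarith [hξ.2, hc.2]⟩, ?_⟩
  rw [hξ']
  have e1 : a + r - a = r := by ring
  have e2 : c + r - c = r := by ring
  simp only [e1, e2] at hc' ⊢
  rw [hc']
  have e3 : a + r + r = a + 2 * r := by ring
  rw [e3]
  field_simp
  ring

theorem aux_pieces (φ φ' φ'' F : ℝ → ℝ) (h1 : ∀ t ∈ Set.Icc (0:ℝ) 1, HasDerivAt φ (φ' t) t)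
    (h2 : ∀ t ∈ Set.Icc (0:ℝ) 1, HasDerivAt φ' (φ'' t) t) (c ε : ℝ) (hc : 0 < c) (hε : 0 < ε)
    (hcφ : ∀ t ∈ Set.Icc (0:ℝ) 1, c ≤ |φ'' t|)
    (hF : ∀ t ∈ Set.Icc (0:ℝ) 1, |F t - φ t| ≤ ε)
    (s : ℕ) (α : ℕ → ℝ) (h0 : α 0 = 0) (hs : α s = 1) (hα : ∀ j < s, α j < α (j + 1))
    (hp : ∀ j < s, ∃ u v : ℝ, ∀ a ∈ Set.Icc (α j) (α (j + 1)), F a = u * a + v) :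
    Real.sqrt (c / (16 * ε)) ≤ s := by
  have hnn : ∀ j ≤ s, 0 ≤ α j := by
    intro j
    induction j with
    | zero => intro _; exact h0.ge
    | succ j ih => intro hj; linarith [ih (by omega), hα j (by omega)]
  have hle : ∀ j ≤ s, α (s - j) ≤ 1 := by
    intro j
    induction j with
    | zero => intro _; exact hs.le
    | succ j ih =>
      intro hj
      have := hα (s - (j + 1)) (by omega)
      have e : s - (j + 1) + 1 = s - j := by omega
      rw [e] at this
      linarith [ih (by omega)]
  have hle' : ∀ j ≤ s, α j ≤ 1 := by
    intro j hj
    have := hle (s - j) (by omega)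
    rwa [show s - (s - j) = j by omega] at this
  have hstep : ∀ j < s, α (j + 1) - α j ≤ Real.sqrt (16 * ε / c) := by
    intro j hj
    apply Real.le_sqrt_of_sq_le
    rw [le_div_iff₀ hc]
    obtain ⟨r, hr⟩ : ∃ r, r = (α (j + 1) - α j) / 2 := ⟨_, rfl⟩
    have hr0 : 0 < r := by linarith [hα j hj]
    have hb : α (j + 1) = α j + 2 * r := by linarith
    have hj0 := hnn j hj.le
    have hj1 := hle' (j + 1) hj
    obtain ⟨ξ, hξ, hE⟩ := aux_second_diff φ φ' φ'' h1 h2 (α j) r hr0 hj0 (by linarith)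
    obtain ⟨u, v, huv⟩ := hp j hj
    have A := huv (α j) ⟨le_rfl, by linarith⟩
    have B := huv (α j + r) ⟨by linarith, by linarith⟩
    have C := huv (α j + 2 * r) ⟨by linarith, by linarith⟩
    have A' := abs_le.1 (hF (α j) ⟨by linarith, by linarith⟩)
    have B' := abs_le.1 (hF (α j + r) ⟨by linarith, by linarith⟩)
    have C' := abs_le.1 (hF (α j + 2 * r) ⟨by linarith, by linarith⟩)
    have D : |r ^ 2 * φ'' ξ| ≤ 4 * ε := by
      rw [← hE, abs_le]
      constructor <;> linarith [A'.1, A'.2, B'.1, B'.2, C'.1, C'.2]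
    rw [abs_mul, abs_of_nonneg (sq_nonneg r)] at D
    have := mul_le_mul_of_nonneg_left (hcφ ξ hξ) (sq_nonneg r)
    have e : α (j + 1) - α j = 2 * r := by linarith
    rw [e]
    nlinarith
  have hsum : ∑ j ∈ Finset.range s, (α (j + 1) - α j) ≤ s * Real.sqrt (16 * ε / c) := by
    have := Finset.sum_le_card_nsmul (Finset.range s) (fun j => α (j + 1) - α j) _
      (fun j hj => hstep j (Finset.mem_range.1 hj))
    simpa using this
  rw [Finset.sum_range_sub, hs, h0] at hsum
  have e : c / (16 * ε) = (16 * ε / c)⁻¹ := by rw [inv_div]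
  have hpos : 0 < Real.sqrt (16 * ε / c) := Real.sqrt_pos.2 (by positivity)
  rw [e, Real.sqrt_inv, inv_le_iff_one_le_mul₀ hpos]
  linarith

theorem aux_compact (n : ℕ) : IsCompact (unitCube n) := by
  have h : IsCompact (Set.pi Set.univ (fun _ : Fin n => Set.Icc (0:ℝ) 1)) :=
    isCompact_univ_pi (fun _ => isCompact_Icc)
  have h2 := h.image (PiLp.continuous_toLp 2 (fun _ : Fin n => ℝ))
  convert h2 using 1
  ext z
  constructor
  · intro hz
    exact ⟨z.ofLp, fun k _ => hz k, rfl⟩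
  · rintro ⟨w, hw, rfl⟩ k
    exact hw k trivial

/-- Proposition 3: lower bound on the number of affine pieces needed to ε-approximate a
C³ function on `[0,1]ⁿ` with third partial derivatives bounded by `δ`, in terms of the
maximum of the absolute value of its Laplacian. -/
theorem pieces_ge_of_laplacian {n : ℕ}
    (U : Set (EuclideanSpace ℝ (Fin n))) (hU : IsOpen U) (hRU : unitCube n ⊆ U)
    (g : EuclideanSpace ℝ (Fin n) → ℝ) (hg : ContDiffOn ℝ 3 g U) (δ : ℝ)
    (hD3 : ∀ x ∈ unitCube n, ∀ i j k : Fin n,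
      |iteratedFDeriv ℝ 3 g x
        ![EuclideanSpace.single i 1, EuclideanSpace.single j 1, EuclideanSpace.single k 1]| ≤ δ)
    (ε : ℝ) (hε : 0 < ε)
    (f : EuclideanSpace ℝ (Fin n) → ℝ) (hf : ∀ z ∈ unitCube n, |f z - g z| ≤ ε) :
    ∃ x ∈ unitCube n, ∃ y ∈ unitCube n, ∀ s : ℕ, PiecewiseAffineAlong f x y s →
      (s : ℝ) ≥ Real.sqrt
        (max ((sSup ((fun z => |∑ k, hess g z k k|) '' unitCube n)) * (n : ℝ)⁻¹
            - δ * (n : ℝ) ^ ((3 : ℝ) / 2)) 0 / (16 * ε)) := by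
  have hcd : ∀ z ∈ unitCube n, ContDiffAt ℝ 3 g z := fun z hz =>
    hg.contDiffAt (hU.mem_nhds (hRU hz))
  have h0mem : (0 : EuclideanSpace ℝ (Fin n)) ∈ unitCube n := fun k => by simp
  by_cases hpos : 0 < (sSup ((fun z => |∑ k, hess g z k k|) '' unitCube n)) * (n : ℝ)⁻¹
            - δ * (n : ℝ) ^ ((3 : ℝ) / 2)
  swap
  · refine ⟨0, h0mem, 0, h0mem, fun s _ => ?_⟩
    rw [max_eq_right (not_lt.1 hpos)]
    simp
  rw [max_eq_left hpos.le]
  have hn : 0 < n := by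
    rcases Nat.eq_zero_or_pos n with rfl | h
    · norm_num at hpos
    · exact h
  have hcont : ContinuousOn (fun z => |∑ k, hess g z k k|) (unitCube n) := by
    intro z hz
    apply ContinuousAt.continuousWithinAt
    have hc : ContinuousAt (iteratedFDeriv ℝ 2 g) z :=
      ((hcd z hz).differentiableAt_iteratedFDeriv (by norm_cast)).continuousAt
    refine ContinuousAt.abs (tendsto_finsetSum _ fun k _ => ?_)
    exact ((ContinuousMultilinearMap.apply ℝ (fun _ : Fin 2 => EuclideanSpace ℝ (Fin n)) ℝ
      ![EuclideanSpace.single k 1, EuclideanSpace.single k 1]).continuous.continuousAt.comp hc)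
  obtain ⟨z, hz, hzM⟩ := (aux_compact n).exists_sSup_image_eq ⟨0, h0mem⟩ hcont
  rw [hzM] at hpos ⊢
  have hnR : (0:ℝ) < n := by exact_mod_cast hn
  obtain ⟨k, hk⟩ : ∃ k, |∑ k, hess g z k k| * (n : ℝ)⁻¹ ≤ |hess g z k k| := by
    by_contra! hcon
    have h1 := Finset.abs_sum_le_sum_abs (fun k => hess g z k k) Finset.univ
    have h2 : ∑ k, |hess g z k k| < ∑ _k : Fin n, |∑ k, hess g z k k| * (n : ℝ)⁻¹ :=
      Finset.sum_lt_sum_of_nonempty ⟨⟨0, hn⟩, Finset.mem_univ _⟩ (fun k _ => hcon k)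
    rw [Finset.sum_const, Finset.card_univ, Fintype.card_fin, nsmul_eq_mul] at h2
    have : (n:ℝ) * (|∑ k, hess g z k k| * (n : ℝ)⁻¹) = |∑ k, hess g z k k| := by
      field_simp
    linarith
  obtain ⟨e, he⟩ : ∃ e : EuclideanSpace ℝ (Fin n), e = EuclideanSpace.single k 1 := ⟨_, rfl⟩
  have hline : ∀ t ∈ Set.Icc (0:ℝ) 1, (z - z k • e) + t • e ∈ unitCube n := by
    intro t ht i
    by_cases hik : i = k
    · subst hik
      simpa [he] using ht
    · simpa [he, hik] using hz i
  have hx : z - z k • e ∈ unitCube n := by simpa using hline 0 (by simp)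
  have hy : z - z k • e + e ∈ unitCube n := by simpa using hline 1 (by simp)
  refine ⟨z - z k • e, hx, z - z k • e + e, hy, ?_⟩
  obtain ⟨x, hxe⟩ : ∃ x, x = z - z k • e := ⟨_, rfl⟩
  rw [← hxe] at hline ⊢
  rintro s ⟨α, hα0, hα1, hα, hp⟩
  have hpt : ∀ a : ℝ, (1 - a) • x + a • (x + e) = x + a • e := by
    intro a; module
  simp only [hpt] at hp
  have hδ : 0 ≤ δ := (abs_nonneg _).trans (hD3 z hz k k k)
  have hδn : δ ≤ δ * (n : ℝ) ^ ((3 : ℝ) / 2) :=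
    le_mul_of_one_le_right hδ (Real.one_le_rpow (by exact_mod_cast hn) (by norm_num))
  have hder : ∀ i < 3, ∀ t ∈ Set.Icc (0:ℝ) 1,
      HasDerivAt (fun t : ℝ => iteratedFDeriv ℝ i g (x + t • e) (fun _ => e))
      (iteratedFDeriv ℝ (i + 1) g (x + t • e) (fun _ => e)) t :=
    fun i hi t ht => aux_hasDeriv g x e t (hcd _ (hline t ht)) i hi
  have hv2 : (![EuclideanSpace.single k 1, EuclideanSpace.single k 1] :
      Fin 2 → EuclideanSpace ℝ (Fin n)) = fun _ => e := by
    ext i; fin_cases i <;> simp [he]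
  have hv3 : (![EuclideanSpace.single k 1, EuclideanSpace.single k 1, EuclideanSpace.single k 1] :
      Fin 3 → EuclideanSpace ℝ (Fin n)) = fun _ => e := by
    ext i; fin_cases i <;> simp [he]
  have hzk : x + z k • e = z := by rw [hxe]; abel
  have hlow : ∀ t ∈ Set.Icc (0:ℝ) 1, |∑ k, hess g z k k| * (n : ℝ)⁻¹
      - δ * (n : ℝ) ^ ((3 : ℝ) / 2) ≤ |iteratedFDeriv ℝ 2 g (x + t • e) (fun _ => e)| := by
    intro t ht
    have hb := (convex_Icc (0:ℝ) 1).norm_image_sub_le_of_norm_hasDerivWithin_le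
      (f := fun t : ℝ => iteratedFDeriv ℝ 2 g (x + t • e) (fun _ => e)) (C := δ)
      (fun u hu => (hder 2 (by norm_num) u hu).hasDerivWithinAt)
      (fun u hu => by
        have := hD3 _ (hline u hu) k k k
        rw [hv3] at this
        exact this) ht (hz k)
    simp only [hzk, Real.norm_eq_abs] at hb
    have hk' : |hess g z k k| = |iteratedFDeriv ℝ 2 g z (fun _ => e)| := by
      rw [← hv2]; rfl
    have h1 : |z k - t| ≤ 1 := by
      rw [abs_le]
      constructor <;> linarith [(hz k).1, (hz k).2, ht.1, ht.2]
    have h2 := mul_le_of_le_one_right hδ h1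
    have h3 := abs_sub_abs_le_abs_sub (iteratedFDeriv ℝ 2 g z (fun _ => e))
      (iteratedFDeriv ℝ 2 g (x + t • e) (fun _ => e))
    linarith
  refine aux_pieces _ _ _ (fun t => f (x + t • e)) (hder 0 (by norm_num)) (hder 1 (by norm_num))
    _ ε hpos hε hlow ?_ s α hα0 hα1 hα ?_
  · intro t ht
    simpa using hf _ (hline t ht)
  · intro j hj
    obtain ⟨p, q, hpq⟩ := hp j hj
    refine ⟨⟪p, e⟫, ⟪p, x⟫ + q, fun a ha => ?_⟩
    simp only [hpq a ha, inner_add_right, inner_smul_right]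
    ring
end

section
/- Let f₁ and f₂ be layered feedforward networks on ℝⁿ of depth d with widths ω₁, …, ω_d that have identical architecture and identical weights (the same matrices Wᵢ, vectors bᵢ, output vector c and scalar c₀, all of whose entries lie in [−A, A] for some A > 0) but activations σ₁ and σ₂ respectively. If σ₁ is Lipschitz with constant δ > 0 and sup_{z ∈ ℝ} |σ₁(z) − σ₂(z)| ≤ η, then for every x ∈ ℝⁿ, |f₁(x) − f₂(x)| ≤ (η/δ) · ( (δ·A·ω + 1)^d − 1 ), where ω = (ω₁ + … + ω_d)/d. -/
/-- A layered feedforward network on `ℝⁿ`, allowing connections from all earlier layers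
and from the input.  Layers are indexed by `0, …, depth - 1`. -/
structure LayeredNet (n : ℕ) where
  depth : ℕ
  width : ℕ → ℕ
  Win : (i : ℕ) → Fin (width i) → Fin n → ℝ
  W : (i j : ℕ) → Fin (width i) → Fin (width j) → ℝ
  b : (i : ℕ) → Fin (width i) → ℝ
  cin : Fin n → ℝ
  c : (i : ℕ) → Fin (width i) → ℝ
  c0 : ℝ

/-- The output of the hidden units in layer `i`. -/
noncomputable def LayeredNet.layer {n : ℕ} (N : LayeredNet n) (σ : ℝ → ℝ)
    (x : EuclideanSpace ℝ (Fin n)) : (i : ℕ) → Fin (N.width i) → ℝ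
  | i => fun k => σ ((∑ m, N.Win i k m * x m) +
      (∑ j : Fin i, ∑ m, N.W i j k m * N.layer σ x j m) + N.b i k)
  termination_by i => i
  decreasing_by exact j.isLt

/-- The (real-valued) output of the network with activation `σ`. -/
noncomputable def LayeredNet.eval {n : ℕ} (N : LayeredNet n) (σ : ℝ → ℝ)
    (x : EuclideanSpace ℝ (Fin n)) : ℝ :=
  (∑ m, N.cin m * x m) + (∑ i ∈ Finset.range N.depth, ∑ m, N.c i m * N.layer σ x i m) + N.c0

/-- The number of hidden units `|H| = ω₁ + ⋯ + ω_d`. -/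
def LayeredNet.numHidden {n : ℕ} (N : LayeredNet n) : ℕ :=
  ∑ i ∈ Finset.range N.depth, N.width i

theorem prod_telescope_aux (a : ℕ → ℝ) (d : ℕ) :
    ∑ i ∈ Finset.range d, a i * ∏ j ∈ Finset.range i, (1 + a j)
      = (∏ j ∈ Finset.range d, (1 + a j)) - 1 := by
  induction d with
  | zero => simp
  | succ k ih =>
    rw [Finset.sum_range_succ, Finset.prod_range_succ, ih]; ring

theorem amgm_aux (a : ℕ → ℝ) (ha : ∀ i, 0 ≤ a i) (d : ℕ) (hd : 1 ≤ d) :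
    ∏ j ∈ Finset.range d, (1 + a j) ≤ ((∑ j ∈ Finset.range d, a j) / d + 1) ^ d := by
  have hd' : (0 : ℝ) < d := by exact_mod_cast hd
  have hp : ∀ i ∈ Finset.range d, (0 : ℝ) ≤ 1 + a i := fun i _ => by linarith [ha i]
  have h := Real.geom_mean_le_arith_mean_weighted (Finset.range d) (fun _ => (1 / d : ℝ))
    (fun j => 1 + a j) (fun i _ => by positivity) (by simp; field_simp) hp
  have h2 : ∑ i ∈ Finset.range d, (1 / d : ℝ) * (1 + a i)
      = (∑ j ∈ Finset.range d, a j) / d + 1 := by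
    rw [← Finset.mul_sum, Finset.sum_add_distrib]
    simp
    field_simp
    ring
  rw [h2, Real.finsetProd_rpow _ _ hp] at h
  have h3 := pow_le_pow_left₀ (Real.rpow_nonneg (Finset.prod_nonneg hp) _) h d
  rwa [← Real.rpow_natCast, ← Real.rpow_mul (Finset.prod_nonneg hp),
    one_div, inv_mul_cancel₀ hd'.ne', Real.rpow_one] at h3

theorem sum_bound_aux {k : ℕ} (A e : ℝ) (hA : 0 ≤ A) (w u v : Fin k → ℝ)
    (hw : ∀ m, |w m| ≤ A) (h : ∀ m, |u m - v m| ≤ e) :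
    |(∑ m, w m * u m) - ∑ m, w m * v m| ≤ A * k * e := by
  rw [← Finset.sum_sub_distrib]
  refine (Finset.abs_sum_le_sum_abs _ _).trans ?_
  refine (Finset.sum_le_sum (g := fun _ => A * e) fun m _ => ?_).trans ?_
  · rw [← mul_sub, abs_mul]
    exact mul_le_mul (hw m) (h m) (abs_nonneg _) hA
  · simp
    apply le_of_eq
    ring

/-- Theorem 3: two networks with identical architecture and weights (all in `[−A, A]`) but
different activations `σ₁` (δ-Lipschitz) and `σ₂` with `sup |σ₁ − σ₂| ≤ η` have outputs
within `(η/δ)·((δ·A·ω + 1)^d − 1)` of each other. -/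
theorem activation_change_bound {n : ℕ} (N : LayeredNet n)
    (hd : 1 ≤ N.depth) (hw : ∀ i < N.depth, 1 ≤ N.width i)
    (A : ℝ) (hA : 0 < A)
    (hWin : ∀ i < N.depth, ∀ (k) (m), |N.Win i k m| ≤ A)
    (hW : ∀ i < N.depth, ∀ j < i, ∀ (k) (m), |N.W i j k m| ≤ A)
    (hb : ∀ i < N.depth, ∀ k, |N.b i k| ≤ A)
    (hcin : ∀ m, |N.cin m| ≤ A)
    (hc : ∀ i < N.depth, ∀ k, |N.c i k| ≤ A)
    (hc0 : |N.c0| ≤ A)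
    (σ₁ σ₂ : ℝ → ℝ) (δ : ℝ) (hδ : 0 < δ)
    (hlip : ∀ a b : ℝ, |σ₁ a - σ₁ b| ≤ δ * |a - b|)
    (η : ℝ) (hη : ∀ z : ℝ, |σ₁ z - σ₂ z| ≤ η)
    (x : EuclideanSpace ℝ (Fin n)) :
    |N.eval σ₁ x - N.eval σ₂ x| ≤
      (η / δ) * ((δ * A * ((N.numHidden : ℝ) / (N.depth : ℝ)) + 1) ^ N.depth - 1) := by
  have hη0 : 0 ≤ η := (abs_nonneg _).trans (hη 0)
  set a : ℕ → ℝ := fun i => δ * A * N.width i with ha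
  have ha0 : ∀ i, 0 ≤ a i := fun i => by simp only [ha]; positivity
  set P : ℕ → ℝ := fun i => ∏ j ∈ Finset.range i, (1 + a j) with hP
  have htel : ∀ d, ∑ i ∈ Finset.range d, a i * P i = P d - 1 :=
    fun d => prod_telescope_aux a d
  have hsum : ∀ d, ∑ i ∈ Finset.range d, A * N.width i * (η * P i) = η / δ * (P d - 1) := by
    intro d
    rw [← htel, Finset.mul_sum]
    refine Finset.sum_congr rfl fun i _ => ?_
    simp only [ha]
    field_simp
  have key : ∀ i < N.depth, ∀ k, |N.layer σ₁ x i k - N.layer σ₂ x i k| ≤ η * P i := by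
    intro i
    induction i using Nat.strong_induction_on with
    | _ i ih =>
      intro hi k
      rw [LayeredNet.layer, LayeredNet.layer]
      have hin : ∀ s t : ℝ, |s - t| ≤ η / δ * (P i - 1) → |σ₁ s - σ₂ t| ≤ η * P i := by
        intro s t hst
        have h1 := hlip s t
        have h2 := hη t
        have h3 : |σ₁ s - σ₂ t| ≤ |σ₁ s - σ₁ t| + |σ₁ t - σ₂ t| := abs_sub_le _ _ _
        have h4 := mul_le_mul_of_nonneg_left hst hδ.le
        have h5 : δ * (η / δ * (P i - 1)) = η * P i - η := by field_simp
        linarith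
      apply hin
      rw [← hsum i, add_sub_add_right_eq_sub, add_sub_add_left_eq_sub,
        ← Finset.sum_sub_distrib, ← Fin.sum_univ_eq_sum_range
          (fun i => A * (N.width i : ℝ) * (η * P i))]
      refine (Finset.abs_sum_le_sum_abs _ _).trans (Finset.sum_le_sum fun j _ => ?_)
      exact sum_bound_aux A _ hA.le _ _ _ (hW i hi j j.isLt k)
        (ih j j.isLt (j.isLt.trans hi))
  have hout : |N.eval σ₁ x - N.eval σ₂ x| ≤ η / δ * (P N.depth - 1) := by
    unfold LayeredNet.eval
    rw [← hsum, add_sub_add_right_eq_sub, add_sub_add_left_eq_sub, ← Finset.sum_sub_distrib]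
    refine (Finset.abs_sum_le_sum_abs _ _).trans (Finset.sum_le_sum fun j hj => ?_)
    have hj' := Finset.mem_range.1 hj
    exact sum_bound_aux A _ hA.le _ _ _ (hc j hj') (key j hj')
  refine hout.trans (mul_le_mul_of_nonneg_left (sub_le_sub_right ?_ _) (by positivity))
  refine (amgm_aux a ha0 N.depth hd).trans (le_of_eq ?_)
  congr 2
  simp only [ha, LayeredNet.numHidden]
  rw [← Finset.mul_sum, mul_div_assoc]
  push_cast
  rfl
end

section
/- Let R ⊆ ℝⁿ be a compact convex set, let g be twice continuously differentiable on an open set containing R with ∇²g(z) ⪰ μ·I for all z ∈ R and some μ > 0, let ε > 0, and let f be a layered feedforward network on ℝⁿ of depth d with widths ω₁, …, ω_d whose activation σ is piecewise linear with t pieces, such that f is an ε-approximation of g on R. Then t^{2|H|} ≥ μ · diam(R)² / (16 ε), where |H| = ω₁ + … + ω_d is the number of hidden units of f and diam(R) = sup_{x, y ∈ R} ‖x − y‖₂. -/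
/-- `σ : ℝ → ℝ` is piecewise linear with `t` pieces: `ℝ` is the union of `t` pairwise
disjoint nonempty intervals on each of which `σ` coincides with an affine function. -/
def PiecewiseLinear (σ : ℝ → ℝ) (t : ℕ) : Prop :=
  ∃ I : Fin t → Set ℝ,
    (∀ i, (I i).Nonempty) ∧ (∀ i, Convex ℝ (I i)) ∧
    (Pairwise fun i j => Disjoint (I i) (I j)) ∧
    (⋃ i, I i) = Set.univ ∧
    ∀ i, ∃ a b : ℝ, ∀ z ∈ I i, σ z = a * z + b

lemma gap_of_hess {n : ℕ} (R : Set (EuclideanSpace ℝ (Fin n))) (hR : Convex ℝ R)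
    (U : Set (EuclideanSpace ℝ (Fin n))) (hU : IsOpen U) (hRU : R ⊆ U)
    (g : EuclideanSpace ℝ (Fin n) → ℝ) (hg : ContDiffOn ℝ 2 g U)
    (μ : ℝ)
    (hstrong : ∀ z ∈ R, (hess g z - μ • (1 : Matrix (Fin n) (Fin n) ℝ)).PosSemidef)
    (m v : EuclideanSpace ℝ (Fin n)) (ha : m + v ∈ R) (hb : m - v ∈ R) :
    μ * ‖v‖ ^ 2 ≤ g (m + v) + g (m - v) - 2 * g m := by
  have hseg : ∀ s ∈ Set.Icc (-1 : ℝ) 1, m + s • v ∈ R := by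
    intro s hs
    have := hR ha hb (a := (1 + s) / 2) (b := (1 - s) / 2) (by linarith [hs.1])
      (by linarith [hs.2]) (by ring)
    convert this using 1
    module
  have hquad : ∀ z ∈ R, μ * ‖v‖ ^ 2 ≤ fderiv ℝ (fderiv ℝ g) z v v := by
    intro z hz
    have h := (hstrong z hz).dotProduct_mulVec_nonneg (v : Fin n → ℝ)
    have hv : v = ∑ i, v i • EuclideanSpace.single i (1 : ℝ) := by
      ext j
      simp [Finset.sum_apply, Pi.single_apply]
    have e : fderiv ℝ (fderiv ℝ g) z v v
        = ∑ i, ∑ j, v i * (v j * hess g z i j) := by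
      conv_lhs => rw [hv]
      simp only [map_sum, map_smul, sum_apply, hess, iteratedFDeriv_two_apply,
        smul_apply, smul_eq_mul, Finset.mul_sum]
      rw [Finset.sum_comm]
      simp
      refine Finset.sum_congr rfl fun i _ => Finset.sum_congr rfl fun j _ => by ring
    rw [e, EuclideanSpace.norm_sq_eq]
    simp only [Matrix.sub_mulVec, dotProduct_sub, Matrix.smul_mulVec, Matrix.one_mulVec,
      dotProduct_smul, smul_eq_mul] at h
    simp only [dotProduct, Matrix.mulVec, star_trivial, Finset.mul_sum] at h
    simp only [Real.norm_eq_abs, sq_abs, Finset.mul_sum]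
    have e2 : ∑ i, ∑ j, v i * (v j * hess g z i j) = ∑ i, ∑ j, v i * (hess g z i j * v j) :=
      Finset.sum_congr rfl fun i _ => Finset.sum_congr rfl fun j _ => by ring
    rw [e2]
    simp only [← sq] at h
    linarith
  have hd1 : ∀ s ∈ Set.Icc (-1 : ℝ) 1,
      HasDerivAt (fun s : ℝ => g (m + s • v)) (fderiv ℝ g (m + s • v) v) s := by
    intro s hs
    have hz := hRU (hseg s hs)
    have h1 : HasFDerivAt g (fderiv ℝ g (m + s • v)) (m + s • v) :=
      ((hg.contDiffAt (hU.mem_nhds hz)).differentiableAt (by norm_num)).hasFDerivAt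
    have h2 : HasDerivAt (fun s : ℝ => m + s • v) v s := by
      simpa using ((hasDerivAt_id s).smul_const v).const_add m
    exact h1.comp_hasDerivAt s h2
  have hd2 : ∀ s ∈ Set.Icc (-1 : ℝ) 1,
      HasDerivAt (fun s : ℝ => fderiv ℝ g (m + s • v) v)
        (fderiv ℝ (fderiv ℝ g) (m + s • v) v v) s := by
    intro s hs
    have hz := hRU (hseg s hs)
    have h1 : HasFDerivAt (fderiv ℝ g) (fderiv ℝ (fderiv ℝ g) (m + s • v)) (m + s • v) :=
      (((hg.contDiffAt (hU.mem_nhds hz)).fderiv_right (m := 1) (by norm_num)).differentiableAt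
        (by norm_num)).hasFDerivAt
    have h2 : HasDerivAt (fun s : ℝ => m + s • v) v s := by
      simpa using ((hasDerivAt_id s).smul_const v).const_add m
    have h3 := h1.comp_hasDerivAt s h2
    simpa using h3.clm_apply (hasDerivAt_const s v)
  set c := μ * ‖v‖ ^ 2 with hc
  have hconv : ConvexOn ℝ (Set.Icc (-1 : ℝ) 1) (fun s : ℝ => g (m + s • v) - c * s ^ 2 / 2) := by
    have k1 : ∀ s ∈ Set.Icc (-1 : ℝ) 1, HasDerivAt (fun s : ℝ => g (m + s • v) - c * s ^ 2 / 2)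
        (fderiv ℝ g (m + s • v) v - c * s) s := by
      intro s hs
      have h := (hd1 s hs).sub ((((hasDerivAt_id s).pow 2).const_mul c).div_const 2)
      refine h.congr_deriv ?_
      simp; ring
    have k2 : ∀ s ∈ Set.Icc (-1 : ℝ) 1, HasDerivAt (fun s : ℝ => fderiv ℝ g (m + s • v) v - c * s)
        (fderiv ℝ (fderiv ℝ g) (m + s • v) v v - c) s := by
      intro s hs
      have h := (hd2 s hs).sub ((hasDerivAt_id s).const_mul c)
      refine h.congr_deriv ?_
      simp
    refine convexOn_of_hasDerivWithinAt2_nonneg (convex_Icc _ _)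
      (fun s hs => (k1 s hs).continuousAt.continuousWithinAt)
      (fun s hs => (k1 s (interior_subset hs)).hasDerivWithinAt)
      (fun s hs => (k2 s (interior_subset hs)).hasDerivWithinAt) ?_
    intro s hs
    linarith [hquad _ (hseg s (interior_subset hs))]
  have hm1 : (-1 : ℝ) ∈ Set.Icc (-1 : ℝ) 1 := by simp
  have hp1 : (1 : ℝ) ∈ Set.Icc (-1 : ℝ) 1 := by simp
  have h20 : (0 : ℝ) ≤ 1 / 2 := by norm_num
  have h := hconv.2 hm1 hp1 h20 h20 (by norm_num)
  norm_num at h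
  rw [← sub_eq_add_neg] at h
  linarith

/-- Input of hidden unit `k` of layer `i`. -/
noncomputable def LayeredNet.pre {n : ℕ} (N : LayeredNet n) (σ : ℝ → ℝ)
    (x : EuclideanSpace ℝ (Fin n)) (i : ℕ) (k : Fin (N.width i)) : ℝ :=
  (∑ m, N.Win i k m * x m) +
      (∑ j : Fin i, ∑ m, N.W i j k m * N.layer σ x j m) + N.b i k

lemma LayeredNet.layer_eq {n : ℕ} (N : LayeredNet n) (σ : ℝ → ℝ)
    (x : EuclideanSpace ℝ (Fin n)) (i : ℕ) (k : Fin (N.width i)) :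
    N.layer σ x i k = σ (N.pre σ x i k) := by
  rw [LayeredNet.layer]; rfl

lemma layer_mid {n : ℕ} (N : LayeredNet n) (σ : ℝ → ℝ) {t : ℕ} (I : Fin t → Set ℝ)
    (hI : ∀ i, Convex ℝ (I i)) (hA : ∀ i, ∃ a b : ℝ, ∀ z ∈ I i, σ z = a * z + b)
    (a b : EuclideanSpace ℝ (Fin n))
    (h : ∀ i < N.depth, ∀ k, ∃ q, N.pre σ a i k ∈ I q ∧ N.pre σ b i k ∈ I q)
    (i : ℕ) (hi : i < N.depth) (k : Fin (N.width i)) :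
    N.layer σ ((1 / 2 : ℝ) • a + (1 / 2 : ℝ) • b) i k
      = (1 / 2) * N.layer σ a i k + (1 / 2) * N.layer σ b i k := by
  induction i using Nat.strong_induction_on with
  | _ i ih =>
    have hp : N.pre σ ((1 / 2 : ℝ) • a + (1 / 2 : ℝ) • b) i k
        = (1 / 2) * N.pre σ a i k + (1 / 2) * N.pre σ b i k := by
      unfold LayeredNet.pre
      have e1 : ∀ j : Fin i, ∀ m, N.layer σ ((1 / 2 : ℝ) • a + (1 / 2 : ℝ) • b) j m
          = (1 / 2) * N.layer σ a j m + (1 / 2) * N.layer σ b j m :=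
        fun j m => ih j j.isLt (j.isLt.trans hi) m
      simp only [e1, PiLp.add_apply, PiLp.smul_apply, smul_eq_mul, mul_add,
        Finset.sum_add_distrib, mul_left_comm _ (1 / 2 : ℝ), ← Finset.mul_sum]
      ring
    obtain ⟨q, ha, hb⟩ := h i hi k
    obtain ⟨α, β, hσ⟩ := hA q
    have hm : (1 / 2) * N.pre σ a i k + (1 / 2) * N.pre σ b i k ∈ I q :=
      hI q ha hb (by norm_num) (by norm_num) (by norm_num)
    rw [N.layer_eq, N.layer_eq, N.layer_eq, hp, hσ _ ha, hσ _ hb, hσ _ hm]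
    ring

lemma eval_mid {n : ℕ} (N : LayeredNet n) (σ : ℝ → ℝ) {t : ℕ} (I : Fin t → Set ℝ)
    (hI : ∀ i, Convex ℝ (I i)) (hA : ∀ i, ∃ a b : ℝ, ∀ z ∈ I i, σ z = a * z + b)
    (a b : EuclideanSpace ℝ (Fin n))
    (h : ∀ i < N.depth, ∀ k, ∃ q, N.pre σ a i k ∈ I q ∧ N.pre σ b i k ∈ I q) :
    N.eval σ ((1 / 2 : ℝ) • a + (1 / 2 : ℝ) • b)
      = (1 / 2) * N.eval σ a + (1 / 2) * N.eval σ b := by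
  unfold LayeredNet.eval
  have e : ∑ i ∈ Finset.range N.depth, ∑ m, N.c i m *
        N.layer σ ((1 / 2 : ℝ) • a + (1 / 2 : ℝ) • b) i m
      = ∑ i ∈ Finset.range N.depth, ∑ m, N.c i m *
        ((1 / 2) * N.layer σ a i m + (1 / 2) * N.layer σ b i m) :=
    Finset.sum_congr rfl fun i hi => Finset.sum_congr rfl fun m _ => by
      rw [layer_mid N σ I hI hA a b h i (Finset.mem_range.1 hi) m]
  rw [e]
  simp only [PiLp.add_apply, PiLp.smul_apply, smul_eq_mul, mul_add,
    Finset.sum_add_distrib, mul_left_comm _ (1 / 2 : ℝ), ← Finset.mul_sum]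
  ring

/-- Corollary 1: if a layered network with piecewise linear activation (`t` pieces)
ε-approximates a `μ`-strongly convex C² function on a compact convex set `R`, then
`t^{2|H|} ≥ μ·diam(R)²/(16 ε)`. -/
theorem network_strongConvex_lower_bound {n : ℕ}
    (R : Set (EuclideanSpace ℝ (Fin n))) (hRc : IsCompact R) (hR : Convex ℝ R)
    (U : Set (EuclideanSpace ℝ (Fin n))) (hU : IsOpen U) (hRU : R ⊆ U)
    (g : EuclideanSpace ℝ (Fin n) → ℝ) (hg : ContDiffOn ℝ 2 g U)
    (μ : ℝ) (hμ : 0 < μ)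
    (hstrong : ∀ z ∈ R, (hess g z - μ • (1 : Matrix (Fin n) (Fin n) ℝ)).PosSemidef)
    (ε : ℝ) (hε : 0 < ε)
    (N : LayeredNet n) (hd : 1 ≤ N.depth) (hw : ∀ i < N.depth, 1 ≤ N.width i)
    (σ : ℝ → ℝ) (t : ℕ) (ht : 1 ≤ t) (hσ : PiecewiseLinear σ t)
    (hf : ∀ z ∈ R, |N.eval σ z - g z| ≤ ε) :
    (t : ℝ) ^ (2 * N.numHidden) ≥ μ * Metric.diam R ^ 2 / (16 * ε) := by
  obtain ⟨I, -, hI, -, hcov, hA⟩ := hσ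
  have hidx : ∀ z : ℝ, ∃ q, z ∈ I q := fun z => by
    have : z ∈ ⋃ i, I i := hcov ▸ Set.mem_univ z
    simpa using this
  choose idx hidx using hidx
  let P := (Σ i : Fin N.depth, Fin (N.width i)) → Fin t
  let Φ : EuclideanSpace ℝ (Fin n) → P := fun x u => idx (N.pre σ x u.1 u.2)
  have hcard : Fintype.card P = t ^ N.numHidden := by
    simp only [P, Fintype.card_fun, Fintype.card_fin, Fintype.card_sigma, LayeredNet.numHidden]
    rw [Finset.sum_range]
  set r := 4 * Real.sqrt (ε / μ) with hr
  have hr2 : r ^ 2 = 16 * ε / μ := by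
    rw [hr, mul_pow, Real.sq_sqrt (by positivity)]; ring
  have hr0 : 0 ≤ r := by positivity
  have hcell : ∀ a ∈ R, ∀ b ∈ R, Φ a = Φ b → dist a b ≤ r := by
    intro a ha b hb hab
    have hmid : (1 / 2 : ℝ) • a + (1 / 2 : ℝ) • b ∈ R :=
      hR ha hb (by norm_num) (by norm_num) (by norm_num)
    have h1 := eval_mid N σ I hI hA a b (fun i hi k => ⟨idx (N.pre σ a i k), hidx _, by
      have : idx (N.pre σ a i k) = idx (N.pre σ b i k) := congrFun hab ⟨⟨i, hi⟩, k⟩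
      rw [this]; exact hidx _⟩)
    have ea : (1 / 2 : ℝ) • a + (1 / 2 : ℝ) • b + (1 / 2 : ℝ) • (a - b) = a := by module
    have eb : (1 / 2 : ℝ) • a + (1 / 2 : ℝ) • b - (1 / 2 : ℝ) • (a - b) = b := by module
    have h2 := gap_of_hess R hR U hU hRU g hg μ hstrong ((1 / 2 : ℝ) • a + (1 / 2 : ℝ) • b)
      ((1 / 2 : ℝ) • (a - b)) (by rwa [ea]) (by rwa [eb])
    rw [ea, eb, norm_smul, ← dist_eq_norm, mul_pow] at h2
    have f1 := abs_le.1 (hf a ha)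
    have f2 := abs_le.1 (hf b hb)
    have f3 := abs_le.1 (hf _ hmid)
    have h3 : μ * dist a b ^ 2 ≤ 16 * ε := by
      norm_num at h2
      norm_num at h1 f3
      linarith
    refine abs_le_of_sq_le_sq' ?_ hr0 |>.2
    rw [hr2, le_div_iff₀ hμ]; linarith
  have hdist : ∀ x ∈ R, ∀ y ∈ R, dist x y ≤ (t : ℝ) ^ N.numHidden * r := by
    intro x hx y hy
    rcases eq_or_lt_of_le (dist_nonneg (x := x) (y := y)) with h0 | hD
    · rw [← h0]; positivity
    let c : ℝ → EuclideanSpace ℝ (Fin n) := fun s => AffineMap.lineMap x y s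
    have hcR : ∀ s ∈ Set.Icc (0 : ℝ) 1, c s ∈ R := fun s hs => hR.lineMap_mem hx hy hs
    let C : P → Set ℝ := fun p => {s | s ∈ Set.Icc (0 : ℝ) 1 ∧ Φ (c s) = p}
    have hC : ∀ p, MeasureTheory.volume (C p) ≤ ENNReal.ofReal (r / dist x y) := by
      intro p
      refine (Real.volume_le_diam _).trans (Metric.ediam_le_of_forall_dist_le ?_)
      rintro s ⟨hs, hs'⟩ s' ⟨hs1, hs1'⟩
      have := hcell _ (hcR s hs) _ (hcR s' hs1) (hs'.trans hs1'.symm)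
      rw [dist_lineMap_lineMap] at this
      rwa [le_div_iff₀ hD]
    have hsub : Set.Icc (0 : ℝ) 1 ⊆ ⋃ p, C p := fun s hs =>
      Set.mem_iUnion.2 ⟨Φ (c s), hs, rfl⟩
    have hm : (1 : ENNReal) ≤ ENNReal.ofReal ((t : ℝ) ^ N.numHidden * (r / dist x y)) := by
      calc (1 : ENNReal) = MeasureTheory.volume (Set.Icc (0 : ℝ) 1) := by simp
        _ ≤ MeasureTheory.volume (⋃ p, C p) := MeasureTheory.measure_mono hsub
        _ ≤ ∑ p, MeasureTheory.volume (C p) := MeasureTheory.measure_iUnion_fintype_le _ _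
        _ ≤ ∑ _p : P, ENNReal.ofReal (r / dist x y) := Finset.sum_le_sum fun p _ => hC p
        _ = _ := by
          rw [Finset.sum_const, Finset.card_univ, hcard, nsmul_eq_mul,
            ENNReal.ofReal_mul (by positivity)]
          congr 1
          rw [← Nat.cast_pow, ENNReal.ofReal_natCast]
    have := ENNReal.one_le_ofReal.1 hm
    rw [← mul_div_assoc, le_div_iff₀ hD] at this
    linarith
  have hdiam : Metric.diam R ≤ (t : ℝ) ^ N.numHidden * r :=
    Metric.diam_le_of_forall_dist_le (by positivity) hdist
  have hsq := pow_le_pow_left₀ Metric.diam_nonneg hdiam 2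
  rw [mul_pow, hr2, ← pow_mul, mul_comm N.numHidden 2] at hsq
  rw [ge_iff_le, div_le_iff₀ (by positivity)]
  calc μ * Metric.diam R ^ 2 ≤ μ * (t ^ (2 * N.numHidden) * (16 * ε / μ)) := by gcongr
    _ = _ := by field_simp
end

section
/- Let g be three times continuously differentiable on an open set containing [0,1]ⁿ with |D^J g(x)| ≤ δ for every x ∈ [0,1]ⁿ and every multi-index J with |J| = 3, let ε > 0, and let f be a layered feedforward network on ℝⁿ of depth d with widths ω₁, …, ω_d whose activation σ is piecewise linear with t pieces, such that f is an ε-approximation of g on [0,1]ⁿ. Then ((t − 1)·ω + 1)^d ≥ sqrt( ( max_{z ∈ [0,1]ⁿ} |Δg(z)| · n⁻¹ − δ · n^{3/2} )⁺ / (16 ε) ), where ω = (ω₁ + … + ω_d)/d, Δg(z) = Σ_{k=1}^n ∂²g/∂x_k²(z) is the Laplacian of g, and a⁺ = max(a, 0). -/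
def PAff (R : ℝ → ℕ) (F : ℝ → ℝ) : Prop :=
  ∀ v, ∃ a b : ℝ, ∀ x, R x = v → F x = a * x + b

theorem PAff.add {R : ℝ → ℕ} {F G : ℝ → ℝ} (hF : PAff R F) (hG : PAff R G) :
    PAff R (fun x => F x + G x) := by
  intro v
  obtain ⟨a, b, h⟩ := hF v
  obtain ⟨a', b', h'⟩ := hG v
  refine ⟨a + a', b + b', fun x hx => ?_⟩
  simp only [h x hx, h' x hx]; ring

theorem PAff.const_mul {R : ℝ → ℕ} {F : ℝ → ℝ} (c : ℝ) (hF : PAff R F) :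
    PAff R (fun x => c * F x) := by
  intro v
  obtain ⟨a, b, h⟩ := hF v
  refine ⟨c * a, c * b, fun x hx => ?_⟩
  simp only [h x hx]; ring

theorem PAff.affine (R : ℝ → ℕ) (a b : ℝ) : PAff R (fun x => a * x + b) :=
  fun _ => ⟨a, b, fun _ _ => rfl⟩

theorem PAff.const (R : ℝ → ℕ) (b : ℝ) : PAff R (fun _ => b) :=
  fun _ => ⟨0, b, fun _ _ => by simp⟩

theorem PAff.sum {R : ℝ → ℕ} {ι : Type*} (s : Finset ι) {F : ι → ℝ → ℝ}
    (hF : ∀ i ∈ s, PAff R (F i)) : PAff R (fun x => ∑ i ∈ s, F i x) := by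
  classical
  induction s using Finset.induction_on with
  | empty => simpa using PAff.const R 0
  | insert i s hi ih =>
    simp only [Finset.sum_insert hi]
    exact (hF i (by simp)).add (ih fun j hj => hF j (by simp [hj]))

theorem PAff.mono {R R' : ℝ → ℕ} {F : ℝ → ℝ} (f : ℕ → ℕ) (h : ∀ x, R x = f (R' x))
    (hF : PAff R F) : PAff R' F := by
  intro v
  obtain ⟨a, b, hab⟩ := hF (f v)
  exact ⟨a, b, fun x hx => hab x (by rw [h, hx])⟩

/-- ordering the pieces -/
theorem exists_rank {σ : ℝ → ℝ} {t : ℕ} (hσ : PiecewiseLinear σ t) :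
    ∃ r : ℝ → ℕ, Monotone r ∧ (∀ x, r x ≤ t - 1) ∧ PAff r σ := by
  classical
  obtain ⟨I, -, hc, hdis, hu, ha⟩ := hσ
  let S : ℝ → Finset (Fin t) := fun x => Finset.univ.filter fun i => ∀ y ∈ I i, y < x
  have hS : ∀ x y, x ≤ y → S x ⊆ S y := by
    intro x y hxy i hi
    simp only [S, Finset.mem_filter, Finset.mem_univ, true_and] at hi ⊢
    exact fun z hz => (hi z hz).trans_le hxy
  have hcov : ∀ x, ∃ i, x ∈ I i := fun x => by
    have : x ∈ ⋃ i, I i := by rw [hu]; trivial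
    simpa using this
  have key : ∀ x y, x ≤ y → (S x).card = (S y).card → ∀ i, x ∈ I i → y ∈ I i := by
    intro x y hxy hcard i hi
    have hEq : S x = S y := Finset.eq_of_subset_of_card_le (hS x y hxy) hcard.ge
    by_contra hy
    have : i ∈ S y := by
      simp only [S, Finset.mem_filter, Finset.mem_univ, true_and]
      intro z hz
      by_contra hzy
      exact hy ((hc i).ordConnected.out hi hz ⟨hxy, not_lt.mp hzy⟩)
    rw [← hEq] at this
    simp only [S, Finset.mem_filter, Finset.mem_univ, true_and] at this
    exact lt_irrefl _ (this x hi)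
  have key' : ∀ x y, x ≤ y → (S x).card = (S y).card → ∀ i, y ∈ I i → x ∈ I i := by
    intro x y hxy hcard i hi
    obtain ⟨j, hj⟩ := hcov x
    have hj' := key x y hxy hcard j hj
    have hij : i = j := by
      by_contra h
      exact Set.disjoint_left.mp (hdis h) hi hj'
    exact hij ▸ hj
  refine ⟨fun x => (S x).card, fun x y h => Finset.card_le_card (hS x y h), ?_, ?_⟩
  · intro x
    obtain ⟨i, hi⟩ := hcov x
    have : (S x).card < (Finset.univ : Finset (Fin t)).card := by
      apply Finset.card_lt_card
      rw [Finset.ssubset_univ_iff]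
      intro h
      have : i ∈ S x := by rw [h]; simp
      simp only [S, Finset.mem_filter, Finset.mem_univ, true_and] at this
      exact lt_irrefl _ (this x hi)
    simp at this
    show (S x).card ≤ t - 1
    omega
  · intro v
    by_cases hv : ∃ x, (S x).card = v
    · obtain ⟨x, hx⟩ := hv
      obtain ⟨i, hi⟩ := hcov x
      obtain ⟨a, b, hab⟩ := ha i
      refine ⟨a, b, fun y hy => hab y ?_⟩
      rcases le_total x y with h | h
      · exact key x y h (hx.trans hy.symm) i hi
      · exact key' y x h (hy.trans hx.symm) i hi
    · exact ⟨0, 0, fun x hx => absurd ⟨x, hx⟩ hv⟩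

theorem exists_rank_comp {σ : ℝ → ℝ} {q : ℕ}
    (hσ : ∃ r : ℝ → ℕ, Monotone r ∧ (∀ x, r x ≤ q) ∧ PAff r σ) (a b : ℝ) :
    ∃ r : ℝ → ℕ, Monotone r ∧ (∀ x, r x ≤ q) ∧ PAff r (fun x => σ (a * x + b)) := by
  obtain ⟨r, hm, hb, hr⟩ := hσ
  have hr' : PAff (fun x => r (a * x + b)) (fun x => σ (a * x + b)) := by
    intro v
    obtain ⟨c, d, h⟩ := hr v
    refine ⟨c * a, c * b + d, fun x hx => ?_⟩
    show σ (a * x + b) = _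
    rw [h _ hx]; ring
  rcases le_total 0 a with ha | ha
  · refine ⟨fun x => r (a * x + b), fun x y hxy => hm ?_, fun x => hb _, hr'⟩
    have := mul_le_mul_of_nonneg_left hxy ha
    linarith
  · refine ⟨fun x => q - r (a * x + b), fun x y hxy => ?_, fun x => Nat.sub_le _ _,
      hr'.mono (fun v => q - v) fun x => ?_⟩
    · have := mul_le_mul_of_nonpos_left hxy ha
      have h2 : r (a * y + b) ≤ r (a * x + b) := hm (by linarith)
      show q - r (a * x + b) ≤ q - r (a * y + b)
      omega
    · have := hb (a * x + b)
      show r (a * x + b) = q - (q - r (a * x + b))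
      omega

/-- common refinement of finitely many monotone ranks -/
theorem exists_rank_family {w q : ℕ} (F : Fin w → ℝ → ℝ)
    (h : ∀ k, ∃ r : ℝ → ℕ, Monotone r ∧ (∀ x, r x ≤ q) ∧ PAff r (F k)) :
    ∃ s : ℝ → ℕ, Monotone s ∧ (∀ x, s x ≤ q * w) ∧ ∀ k, PAff s (F k) := by
  choose r hm hb hr using h
  have hmono : Monotone fun x => ∑ k, r k x :=
    fun x y hxy => Finset.sum_le_sum fun k _ => hm k hxy
  have key : ∀ x y, x ≤ y → ∑ k, r k x = ∑ k, r k y → ∀ k, r k x = r k y := by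
    intro x y hxy he k
    exact (Finset.sum_eq_sum_iff_of_le fun k _ => hm k hxy).mp he k (Finset.mem_univ k)
  refine ⟨fun x => ∑ k, r k x, hmono, fun x => ?_, fun k v => ?_⟩
  · calc ∑ k, r k x ≤ ∑ _k : Fin w, q := Finset.sum_le_sum fun k _ => hb k x
      _ = q * w := by simp [mul_comm]
  · by_cases hv : ∃ x, ∑ k, r k x = v
    · obtain ⟨x, hx⟩ := hv
      obtain ⟨a, b, hab⟩ := hr k (r k x)
      refine ⟨a, b, fun y hy => hab y ?_⟩
      rcases le_total x y with h | h
      · exact (key x y h (hx.trans hy.symm) k).symm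
      · exact key y x h (hy.trans hx.symm) k
    · exact ⟨0, 0, fun x hx => absurd ⟨x, hx⟩ hv⟩

/-- one more layer -/
theorem rank_step {σ : ℝ → ℝ} {q w P : ℕ}
    (hσ : ∃ r : ℝ → ℕ, Monotone r ∧ (∀ x, r x ≤ q) ∧ PAff r σ)
    (R : ℝ → ℕ) (hR : Monotone R) (hRb : ∀ x, R x < P)
    (F : Fin w → ℝ → ℝ) (hF : ∀ k, PAff R (F k)) :
    ∃ R' : ℝ → ℕ, Monotone R' ∧ (∀ x, R' x < P * (q * w + 1)) ∧
      (∃ f : ℕ → ℕ, ∀ x, R x = f (R' x)) ∧ ∀ k, PAff R' (fun x => σ (F k x)) := by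
  choose a b hab using hF
  have h1 : ∀ v, ∃ s : ℝ → ℕ, Monotone s ∧ (∀ x, s x ≤ q * w) ∧
      ∀ k, PAff s (fun x => σ (a k v * x + b k v)) := fun v =>
    exists_rank_family _ fun k => exists_rank_comp hσ _ _
  choose s hm hb hs using h1
  have hdiv : ∀ x, R x = (R x * (q * w + 1) + s (R x) x) / (q * w + 1) := by
    intro x
    have := hb (R x) x
    rw [mul_comm, Nat.mul_add_div (by omega), Nat.div_eq_of_lt (by omega), add_zero]
  have hmod : ∀ x, s (R x) x = (R x * (q * w + 1) + s (R x) x) % (q * w + 1) := by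
    intro x
    have := hb (R x) x
    rw [mul_comm, Nat.mul_add_mod, Nat.mod_eq_of_lt (by omega)]
  refine ⟨fun x => R x * (q * w + 1) + s (R x) x, ?_, ?_, ⟨fun v => v / (q * w + 1), hdiv⟩, ?_⟩
  · intro x y hxy
    rcases (hR hxy).eq_or_lt with h | h
    · simp only [h]
      exact Nat.add_le_add_left (hm _ hxy) _
    · have := hb (R x) x
      have h2 : (R x + 1) * (q * w + 1) ≤ R y * (q * w + 1) := Nat.mul_le_mul_right _ h
      simp only
      nlinarith
  · intro x
    have := hb (R x) x
    have h2 : (R x + 1) * (q * w + 1) ≤ P * (q * w + 1) := Nat.mul_le_mul_right _ (hRb x)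
    simp only
    nlinarith
  · intro k v
    obtain ⟨c, d, h⟩ := hs (v / (q * w + 1)) k (v % (q * w + 1))
    refine ⟨c, d, fun x hx => ?_⟩
    have h1 : R x = v / (q * w + 1) := by rw [hdiv x]; simp only at hx; rw [hx]
    have h2 : s (R x) x = v % (q * w + 1) := by rw [hmod x]; simp only at hx; rw [hx]
    simp only
    rw [hab k (R x) x rfl, h1]
    exact h x (by rw [← h1, h2])

theorem LayeredNet.exists_rank {n : ℕ} (N : LayeredNet n) {σ : ℝ → ℝ} {q : ℕ}
    (hσ : ∃ r : ℝ → ℕ, Monotone r ∧ (∀ x, r x ≤ q) ∧ PAff r σ)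
    (ℓ : ℝ → EuclideanSpace ℝ (Fin n)) (hℓ : ∀ m, ∃ a b : ℝ, ∀ s, ℓ s m = a * s + b) (i : ℕ) :
    ∃ R : ℝ → ℕ, Monotone R ∧ (∀ x, R x < ∏ j ∈ Finset.range i, (q * N.width j + 1)) ∧
      ∀ j < i, ∀ k, PAff R (fun s => N.layer σ (ℓ s) j k) := by
  induction i with
  | zero => exact ⟨fun _ => 0, monotone_const, by simp, by simp⟩
  | succ i ih =>
    obtain ⟨R, hR, hRb, hL⟩ := ih
    have hin : ∀ m, PAff R (fun s => ℓ s m) := by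
      intro m
      obtain ⟨a, b, h⟩ := hℓ m
      simp only [h]
      exact PAff.affine R a b
    obtain ⟨R', hR', hRb', ⟨f, hf⟩, hN⟩ := rank_step hσ R hR hRb
      (fun (k : Fin (N.width i)) s => (∑ m, N.Win i k m * ℓ s m) +
      (∑ j : Fin i, ∑ m, N.W i j k m * N.layer σ (ℓ s) j m) + N.b i k) (by
        intro k
        refine PAff.add (PAff.add ?_ ?_) (PAff.const _ _)
        · exact PAff.sum _ fun m _ => (hin m).const_mul _
        · exact PAff.sum _ fun j _ => PAff.sum _ fun m _ => (hL j j.isLt m).const_mul _)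
    refine ⟨R', hR', ?_, ?_⟩
    · simpa [Finset.prod_range_succ] using hRb'
    · intro j hj k
      rcases Nat.lt_succ_iff_lt_or_eq.mp hj with h | h
      · exact (hL j h k).mono f hf
      · subst h
        have := hN k
        convert this using 2 with s
        rw [LayeredNet.layer]

theorem LayeredNet.eval_rank {n : ℕ} (N : LayeredNet n) {σ : ℝ → ℝ} {q : ℕ}
    (hσ : ∃ r : ℝ → ℕ, Monotone r ∧ (∀ x, r x ≤ q) ∧ PAff r σ)
    (ℓ : ℝ → EuclideanSpace ℝ (Fin n)) (hℓ : ∀ m, ∃ a b : ℝ, ∀ s, ℓ s m = a * s + b) :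
    ∃ R : ℝ → ℕ, Monotone R ∧ (∀ x, R x < ∏ j ∈ Finset.range N.depth, (q * N.width j + 1)) ∧
      PAff R (fun s => N.eval σ (ℓ s)) := by
  obtain ⟨R, hR, hRb, hL⟩ := N.exists_rank hσ ℓ hℓ N.depth
  refine ⟨R, hR, hRb, ?_⟩
  have hin : ∀ m, PAff R (fun s => ℓ s m) := by
    intro m
    obtain ⟨a, b, h⟩ := hℓ m
    simp only [h]
    exact PAff.affine R a b
  unfold LayeredNet.eval
  refine PAff.add (PAff.add ?_ ?_) (PAff.const _ _)
  · exact PAff.sum _ fun m _ => (hin m).const_mul _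
  · exact PAff.sum _ fun j hj => PAff.sum _ fun m _ =>
      (hL j (Finset.mem_range.mp hj) m).const_mul _

/-- AM-GM -/
theorem prod_le_pow_avg (w : ℕ → ℕ) (d q : ℕ) (hd : 1 ≤ d) :
    ((∏ j ∈ Finset.range d, (q * w j + 1) : ℕ) : ℝ) ≤
      ((q : ℝ) * (((∑ j ∈ Finset.range d, w j : ℕ) : ℝ) / d) + 1) ^ d := by
  have hd' : (d : ℝ) ≠ 0 := by positivity
  have h := Real.geom_mean_le_arith_mean_weighted (Finset.range d) (fun _ => (d : ℝ)⁻¹)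
    (fun j => (q * w j + 1 : ℝ)) (fun _ _ => by positivity) (by simp [hd'])
    (fun _ _ => by positivity)
  rw [Real.finsetProd_rpow _ _ (fun _ _ => by positivity)] at h
  have h2 := pow_le_pow_left₀ (by positivity) h d
  rw [Real.rpow_inv_natCast_pow (by positivity) (by omega)] at h2
  push_cast
  refine h2.trans (le_of_eq ?_)
  congr 1
  rw [← Finset.mul_sum, Finset.sum_add_distrib, ← Finset.mul_sum]
  simp
  field_simp

/-- one-dimensional bound -/
theorem one_dim_bound {c ε : ℝ} (hε : 0 < ε) {P : ℕ} (R : ℝ → ℕ) (hR : Monotone R)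
    (hRb : ∀ x, R x < P) (F : ℝ → ℝ) (hF : PAff R F) (φ φ1 φ2 : ℝ → ℝ)
    (h1 : ∀ s ∈ Set.Icc (0 : ℝ) 1, HasDerivAt φ (φ1 s) s)
    (h2 : ∀ s ∈ Set.Icc (0 : ℝ) 1, HasDerivAt φ1 (φ2 s) s)
    (hc : ∀ s ∈ Set.Icc (0 : ℝ) 1, c ≤ φ2 s)
    (hf : ∀ s ∈ Set.Icc (0 : ℝ) 1, |F s - φ s| ≤ ε) :
    c ≤ 16 * ε * (P : ℝ) ^ 2 := by
  rcases le_or_gt c 0 with hc0 | hc0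
  · exact hc0.trans (by positivity)
  have hconv : ConvexOn ℝ (Set.Icc (0 : ℝ) 1) (fun s => φ s - c / 2 * s ^ 2) := by
    refine convexOn_of_hasDerivWithinAt2_nonneg (convex_Icc 0 1)
      (f' := fun s => φ1 s - c * s) (f'' := fun s => φ2 s - c) ?_ ?_ ?_ ?_
    · exact ContinuousOn.sub (fun s hs => (h1 s hs).continuousAt.continuousWithinAt)
        (by fun_prop)
    · intro s hs
      have := (h1 s (interior_subset hs)).fun_sub ((hasDerivAt_pow 2 s).const_mul (c / 2))
      refine HasDerivAt.hasDerivWithinAt (this.congr_deriv ?_)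
      norm_num
      ring
    · intro s hs
      have := (h2 s (interior_subset hs)).fun_sub ((hasDerivAt_id' s).const_mul c)
      refine HasDerivAt.hasDerivWithinAt (this.congr_deriv ?_)
      simp
    · intro s hs
      have := hc s (interior_subset hs)
      linarith
  have key : ∀ a ∈ Set.Icc (0 : ℝ) 1, ∀ b ∈ Set.Icc (0 : ℝ) 1, a ≤ b → R a = R b →
      c * (b - a) ^ 2 ≤ 16 * ε := by
    intro a ha b hb hab hRab
    have hm : (a + b) / 2 ∈ Set.Icc (0 : ℝ) 1 :=
      ⟨by linarith [ha.1, hb.1], by linarith [ha.2, hb.2]⟩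
    have hRm : R ((a + b) / 2) = R a := by
      apply le_antisymm
      · rw [hRab]; exact hR (by linarith)
      · exact hR (by linarith)
    obtain ⟨u, v, huv⟩ := hF (R a)
    have e1 := huv a rfl
    have e2 := huv b hRab.symm
    have e3 := huv _ hRm
    have f1 := abs_le.mp (hf a ha)
    have f2 := abs_le.mp (hf b hb)
    have f3 := abs_le.mp (hf _ hm)
    have hcv := hconv.2 ha hb (show (0 : ℝ) ≤ 1 / 2 by norm_num) (show (0 : ℝ) ≤ 1 / 2 by norm_num)
      (by norm_num)
    simp only [smul_eq_mul] at hcv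
    rw [show 1 / 2 * a + 1 / 2 * b = (a + b) / 2 by ring] at hcv
    have : F a + F b - 2 * F ((a + b) / 2) = 0 := by rw [e1, e2, e3]; ring
    nlinarith
  set L : ℝ := Real.sqrt (16 * ε / c) with hL
  have key2 : ∀ v, MeasureTheory.volume (Set.Icc (0 : ℝ) 1 ∩ R ⁻¹' {v}) ≤ ENNReal.ofReal L := by
    intro v
    refine (Real.volume_le_diam _).trans (Metric.ediam_le fun x hx y hy => ?_)
    rw [edist_dist]
    refine ENNReal.ofReal_le_ofReal ?_
    have hRxy : R x = R y := hx.2.trans hy.2.symm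
    rw [Real.dist_eq]
    apply Real.abs_le_sqrt
    rw [le_div_iff₀ hc0]
    rcases le_total x y with h | h
    · have := key x hx.1 y hy.1 h hRxy
      nlinarith
    · have := key y hy.1 x hx.1 h hRxy.symm
      nlinarith
  have hvol : (1 : ENNReal) ≤ P * ENNReal.ofReal L := by
    calc (1 : ENNReal) = MeasureTheory.volume (Set.Icc (0 : ℝ) 1) := by simp
      _ ≤ MeasureTheory.volume (⋃ v ∈ Finset.range P, Set.Icc (0 : ℝ) 1 ∩ R ⁻¹' {v}) := by
        apply MeasureTheory.measure_mono
        intro x hx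
        simp only [Set.mem_iUnion]
        exact ⟨R x, Finset.mem_range.mpr (hRb x), hx, rfl⟩
      _ ≤ ∑ v ∈ Finset.range P, MeasureTheory.volume (Set.Icc (0 : ℝ) 1 ∩ R ⁻¹' {v}) :=
        MeasureTheory.measure_biUnion_finset_le _ _
      _ ≤ ∑ v ∈ Finset.range P, ENNReal.ofReal L := Finset.sum_le_sum fun v _ => key2 v
      _ = P * ENNReal.ofReal L := by simp
  have hL0 : 0 ≤ L := Real.sqrt_nonneg _
  have h3 : 1 ≤ P * L := by
    rw [← ENNReal.ofReal_natCast, ← ENNReal.ofReal_mul (by positivity)] at hvol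
    exact ENNReal.one_le_ofReal.mp hvol
  have hLsq : L ^ 2 = 16 * ε / c := Real.sq_sqrt (by positivity)
  have h4 : 1 ≤ (P * L) ^ 2 := one_le_pow₀ h3
  rw [mul_pow, hLsq, ← mul_div_assoc, le_div_iff₀ hc0] at h4
  linarith

theorem hasDerivAt_iter {n : ℕ} {g : EuclideanSpace ℝ (Fin n) → ℝ} (p e : EuclideanSpace ℝ (Fin n))
    (j : ℕ) (s : ℝ) (hg : ContDiffAt ℝ 3 g (p + s • e)) (hj : j < 3) :
    HasDerivAt (fun s : ℝ => iteratedFDeriv ℝ j g (p + s • e) (fun _ => e))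
      (iteratedFDeriv ℝ (j + 1) g (p + s • e) (fun _ => e)) s := by
  have hd : DifferentiableAt ℝ (iteratedFDeriv ℝ j g) (p + s • e) :=
    hg.differentiableAt_iteratedFDeriv (by exact_mod_cast hj)
  have hl : HasDerivAt (fun s : ℝ => p + s • e) e s := by
    simpa using ((hasDerivAt_id s).smul_const e).const_add p
  have h := hd.hasFDerivAt.comp_hasDerivAt s hl
  rw [iteratedFDeriv_succ_apply_left]
  have h2 := (ContinuousMultilinearMap.apply ℝ (fun _ : Fin j => EuclideanSpace ℝ (Fin n)) ℝ
    (fun _ => e)).hasFDerivAt.comp_hasDerivAt s h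
  exact h2

theorem pointwise_bound {n : ℕ}
    (U : Set (EuclideanSpace ℝ (Fin n))) (hU : IsOpen U) (hRU : unitCube n ⊆ U)
    (g : EuclideanSpace ℝ (Fin n) → ℝ) (hg : ContDiffOn ℝ 3 g U) (δ : ℝ)
    (hD3 : ∀ x ∈ unitCube n, ∀ i j k : Fin n,
      |iteratedFDeriv ℝ 3 g x
        ![EuclideanSpace.single i 1, EuclideanSpace.single j 1, EuclideanSpace.single k 1]| ≤ δ)
    (ε : ℝ) (hε : 0 < ε) (N : LayeredNet n) (σ : ℝ → ℝ) (q : ℕ)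
    (hσ : ∃ r : ℝ → ℕ, Monotone r ∧ (∀ x, r x ≤ q) ∧ PAff r σ)
    (hf : ∀ z ∈ unitCube n, |N.eval σ z - g z| ≤ ε)
    (z : EuclideanSpace ℝ (Fin n)) (hz : z ∈ unitCube n) (k : Fin n) :
    |hess g z k k| - δ ≤
      16 * ε * ((∏ j ∈ Finset.range N.depth, (q * N.width j + 1) : ℕ) : ℝ) ^ 2 := by
  set e : EuclideanSpace ℝ (Fin n) := EuclideanSpace.single k 1 with he
  set p : EuclideanSpace ℝ (Fin n) := z - z k • e with hp
  have hcoord : ∀ (s : ℝ) m, (p + s • e) m = if m = k then s else z m := by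
    intro s m
    by_cases h : m = k
    · subst h; simp [hp, he]
    · simp [hp, he, h]
  have hcube : ∀ s ∈ Set.Icc (0 : ℝ) 1, p + s • e ∈ unitCube n := by
    intro s hs m
    rw [hcoord]
    split_ifs
    · exact hs
    · exact hz m
  have hzp : p + z k • e = z := by simp [hp]
  have hder : ∀ j < 3, ∀ s ∈ Set.Icc (0 : ℝ) 1,
      HasDerivAt (fun s : ℝ => iteratedFDeriv ℝ j g (p + s • e) (fun _ => e))
      (iteratedFDeriv ℝ (j + 1) g (p + s • e) (fun _ => e)) s := fun j hj s hs =>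
    hasDerivAt_iter p e j s (hg.contDiffAt (hU.mem_nhds (hRU (hcube s hs)))) hj
  have hhess : hess g z k k = iteratedFDeriv ℝ 2 g (p + z k • e) (fun _ => e) := by
    rw [hzp]
    unfold hess
    congr 1
    ext i; fin_cases i <;> rfl
  have h3 : ∀ s ∈ Set.Icc (0 : ℝ) 1, ‖iteratedFDeriv ℝ 3 g (p + s • e) (fun _ => e)‖ ≤ δ := by
    intro s hs
    have := hD3 _ (hcube s hs) k k k
    rw [Real.norm_eq_abs]
    convert this using 3
    ext i; fin_cases i <;> rfl
  have hδ : 0 ≤ δ := (norm_nonneg _).trans (h3 0 (by simp))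
  have hmv : ∀ s ∈ Set.Icc (0 : ℝ) 1,
      |iteratedFDeriv ℝ 2 g (p + s • e) (fun _ => e) - hess g z k k| ≤ δ := by
    intro s hs
    rw [hhess]
    have := (convex_Icc (0 : ℝ) 1).norm_image_sub_le_of_norm_hasDerivWithin_le
      (fun x hx => (hder 2 (by norm_num) x hx).hasDerivWithinAt) h3 (hz k) hs
    refine this.trans (mul_le_of_le_one_right hδ ?_)
    rw [Real.norm_eq_abs, abs_le]
    have := hz k
    constructor <;> linarith [hs.1, hs.2, this.1, this.2]
  obtain ⟨R, hR, hRb, hPA⟩ := N.eval_rank hσ (fun s => p + s • e) (by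
    intro m
    by_cases h : m = k
    · exact ⟨1, 0, fun s => by rw [hcoord]; simp [h]⟩
    · exact ⟨0, z m, fun s => by rw [hcoord]; simp [h]⟩)
  rcases le_total 0 (hess g z k k) with h0 | h0
  · rw [abs_of_nonneg h0]
    refine one_dim_bound hε R hR hRb _ hPA _ _ _ (hder 0 (by norm_num)) (hder 1 (by norm_num))
      (fun s hs => ?_) (fun s hs => ?_)
    · have := (abs_le.mp (hmv s hs)).1
      simp only [Nat.reduceAdd]
      linarith
    · simpa using hf _ (hcube s hs)
  · rw [abs_of_nonpos h0]
    refine one_dim_bound hε R hR hRb _ (hPA.const_mul (-1)) _ _ _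
      (fun s hs => (hder 0 (by norm_num) s hs).neg)
      (fun s hs => (hder 1 (by norm_num) s hs).neg)
      (fun s hs => ?_) (fun s hs => ?_)
    · have := (abs_le.mp (hmv s hs)).2
      simp only [Nat.reduceAdd]
      linarith
    · have := hf _ (hcube s hs)
      rw [← abs_neg] at this
      convert this using 2
      simp; ring


/-- Theorem 2: if a layered network with piecewise linear activation (`t` pieces)
ε-approximates on `[0,1]ⁿ` a C³ function `g` whose third partial derivatives are bounded
by `δ`, then `((t − 1)·ω + 1)^d ≥ sqrt((max_z |Δg(z)|·n⁻¹ − δ·n^{3/2})⁺ / (16 ε))`. -/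
theorem network_laplacian_lower_bound {n : ℕ}
    (U : Set (EuclideanSpace ℝ (Fin n))) (hU : IsOpen U) (hRU : unitCube n ⊆ U)
    (g : EuclideanSpace ℝ (Fin n) → ℝ) (hg : ContDiffOn ℝ 3 g U) (δ : ℝ)
    (hD3 : ∀ x ∈ unitCube n, ∀ i j k : Fin n,
      |iteratedFDeriv ℝ 3 g x
        ![EuclideanSpace.single i 1, EuclideanSpace.single j 1, EuclideanSpace.single k 1]| ≤ δ)
    (ε : ℝ) (hε : 0 < ε)
    (N : LayeredNet n) (hd : 1 ≤ N.depth) (hw : ∀ i < N.depth, 1 ≤ N.width i)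
    (σ : ℝ → ℝ) (t : ℕ) (ht : 1 ≤ t) (hσ : PiecewiseLinear σ t)
    (hf : ∀ z ∈ unitCube n, |N.eval σ z - g z| ≤ ε) :
    (((t : ℝ) - 1) * ((N.numHidden : ℝ) / (N.depth : ℝ)) + 1) ^ N.depth ≥
      Real.sqrt
        (max ((sSup ((fun z => |∑ k, hess g z k k|) '' unitCube n)) * (n : ℝ)⁻¹
            - δ * (n : ℝ) ^ ((3 : ℝ) / 2)) 0 / (16 * ε)) := by
  obtain rfl | hn := Nat.eq_zero_or_pos n
  · have h0 : (0 : ℝ) ≤ (((t : ℝ) - 1) * ((N.numHidden : ℝ) / (N.depth : ℝ)) + 1) ^ N.depth := by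
      have : (1 : ℝ) ≤ t := by exact_mod_cast ht
      have : (0 : ℝ) ≤ (t : ℝ) - 1 := by linarith
      positivity
    have h1 : ((0 : ℕ) : ℝ) ^ ((3 : ℝ) / 2) = 0 := by
      rw [Nat.cast_zero, Real.zero_rpow (by norm_num)]
    rw [h1]
    simpa using h0
  have hn0 : (0 : ℝ) < n := by exact_mod_cast hn
  have hn1 : (1 : ℝ) ≤ n := by exact_mod_cast hn
  have hz0 : (0 : EuclideanSpace ℝ (Fin n)) ∈ unitCube n := fun k => by simp
  have hδ : 0 ≤ δ := (abs_nonneg _).trans (hD3 0 hz0 ⟨0, hn⟩ ⟨0, hn⟩ ⟨0, hn⟩)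
  have hnp : (1 : ℝ) ≤ (n : ℝ) ^ ((3 : ℝ) / 2) := Real.one_le_rpow hn1 (by norm_num)
  set P : ℕ := ∏ j ∈ Finset.range N.depth, ((t - 1) * N.width j + 1) with hP
  have hPle : (P : ℝ) ≤ (((t : ℝ) - 1) * ((N.numHidden : ℝ) / (N.depth : ℝ)) + 1) ^ N.depth := by
    have := prod_le_pow_avg N.width N.depth (t - 1) hd
    rwa [Nat.cast_sub ht, Nat.cast_one] at this
  have hpt := pointwise_bound U hU hRU g hg δ hD3 ε hε N σ (t - 1) (exists_rank hσ) hf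
  refine le_trans ?_ hPle
  apply Real.sqrt_le_iff.mpr
  refine ⟨by positivity, ?_⟩
  rw [div_le_iff₀ (by positivity)]
  refine max_le ?_ (by positivity)
  have hsup : sSup ((fun z => |∑ k, hess g z k k|) '' unitCube n) ≤
      n * (16 * ε * (P : ℝ) ^ 2 + δ) := by
    apply csSup_le (Set.Nonempty.image _ ⟨0, hz0⟩)
    rintro _ ⟨z, hz, rfl⟩
    calc |∑ k, hess g z k k| ≤ ∑ k, |hess g z k k| := Finset.abs_sum_le_sum_abs _ _
      _ ≤ ∑ _k : Fin n, (16 * ε * (P : ℝ) ^ 2 + δ) :=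
        Finset.sum_le_sum fun k _ => by linarith [hpt z hz k]
      _ = n * (16 * ε * (P : ℝ) ^ 2 + δ) := by simp; ring
  have h5 : sSup ((fun z => |∑ k, hess g z k k|) '' unitCube n) * (n : ℝ)⁻¹ ≤
      16 * ε * (P : ℝ) ^ 2 + δ := by
    rw [← div_eq_mul_inv, div_le_iff₀ hn0]
    linarith
  have h6 : δ ≤ δ * (n : ℝ) ^ ((3 : ℝ) / 2) := le_mul_of_one_le_right hδ hnp
  linarith
end
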